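/- arXiv:math/0412354 — 2 statements merged into one kernel-verified Lean document; each statement's English description precedes it below -/
import Mathlib

section
/- Let K be a field of characteristic 0 equipped with a derivation D, and let F ⊆ L ⊆ K be differential subfields. If every element of L is differentially algebraic over F and every element of K is differentially algebraic over L, then every element of K is differentially algebraic over F. -/
/-- `b ∈ K` is differentially algebraic over the differential subfield `L` of `K`:
there are `n ∈ ℕ` and a nonzero polynomial in `n + 1` variables with coefficients in `L`
vanishing at `(b, Db, …, Dⁿb)`. -/
def IsDifferentiallyAlgebraic {K : Type*} [Field K] (D : K → K) (L : Subfield K) (b : K) :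
    Prop :=
  ∃ (n : ℕ) (P : MvPolynomial (Fin (n + 1)) K),
    P ≠ 0 ∧ (∀ m, P.coeff m ∈ L) ∧
    MvPolynomial.eval (fun i : Fin (n + 1) => D^[i.val] b) P = 0

/-!
Over a differential field `F` of characteristic zero, `b` is differentially algebraic if and only
if it lies in a differential field `E ⊇ F` that is finitely generated as a field over `F`.
If `b` is differentially algebraic, some `Dⁿb` is algebraic over `F(b, …, Dⁿ⁻¹b)`; differentiating
its minimal polynomial, whose derivative does not vanish at `Dⁿb` by separability, shows
`Dⁿ⁺¹b ∈ F(b, …, Dⁿb)`, so this field is closed under `D`. Conversely, infinitely many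
derivatives `Dⁱb` cannot be algebraically independent in a field of finite transcendence degree.

Finitely generated differential extensions are transitive and closed under finite composita, and
only the finitely many coefficients of one equation for `b` matter, which gives the theorem.
-/

open Polynomial

theorem algebraicIndependent_of_transcendental_adjoin_Iio {R A : Type*} [CommRing R] [CommRing A]
    [Algebra R A] {x : ℕ → A} (hinj : Function.Injective (algebraMap R A))
    (hx : ∀ n, Transcendental (Algebra.adjoin R (x '' Set.Iio n)) (x n)) :
    AlgebraicIndependent R x := by
  have initial_segment : ∀ n, AlgebraicIndepOn R x (Set.Iio n) := by
    intro n
    induction n with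
    | zero =>
      have : IsEmpty (Set.Iio 0) := by simp
      exact algebraicIndependent_empty_type_iff.2 hinj
    | succ n ih =>
      rw [Set.Iio_add_one_eq_Iic, ← Set.Iio_insert]
      exact ih.insert (hx n)
  refine algebraicIndependent_of_finite_type fun t ht ↦ ?_
  obtain ⟨N, hN⟩ := ht.bddAbove
  exact (initial_segment (N + 1)).mono fun i hi ↦ Nat.lt_succ_of_le (hN hi)

section Field

variable {K : Type*} [Field K]

theorem intermediateField_adjoin_toSubfield (F : Subfield K) (S : Set K) :
    (IntermediateField.adjoin F S).toSubfield = F ⊔ Subfield.closure S := by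
  rw [IntermediateField.adjoin_toSubfield, Subfield.closure_union]
  congr 1
  exact (congrArg Subfield.closure Subtype.range_coe).trans F.closure_eq

theorem not_algebraicIndependent_of_mem_sup_closure {F : Subfield K} {S : Set K} (hS : S.Finite)
    {ι : Type*} [Infinite ι] {x : ι → K} (hx : ∀ i, x i ∈ F ⊔ Subfield.closure S) :
    ¬ AlgebraicIndependent F x := by
  intro hind
  rw [← intermediateField_adjoin_toSubfield] at hx
  have : Algebra.EssFiniteType F (IntermediateField.adjoin F S) :=
    IntermediateField.essFiniteType_iff.2 (IntermediateField.fg_adjoin_of_finite hS)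
  have hind' : AlgebraicIndependent F fun i ↦ (⟨x i, hx i⟩ : IntermediateField.adjoin F S) :=
    .of_comp (IntermediateField.adjoin F S).val hind
  exact not_finite_iff_infinite.2 inferInstance (finite_of_algebraicIndependent hind')

/-- The subfield `F(Dⁱb : i ∈ s)` of `K`. For an initial segment `s` of `ℕ` it is generated over
`F` by the derivatives of `b` up to a given order, starting with `D⁰b = b`. -/
def adjoinIterates (D : K → K) (F : Subfield K) (b : K) (s : Set ℕ) : Subfield K :=
  F ⊔ Subfield.closure ((fun i ↦ D^[i] b) '' s)

theorem iterate_mem_adjoinIterates (D : K → K) (F : Subfield K) (b : K) {s : Set ℕ} {i : ℕ}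
    (hi : i ∈ s) : D^[i] b ∈ adjoinIterates D F b s :=
  le_sup_right (a := F) (Subfield.subset_closure ⟨i, hi, rfl⟩)

theorem adjoinIterates_le {D : K → K} {F E : Subfield K} {b : K} {s : Set ℕ} (hF : F ≤ E)
    (hb : ∀ i ∈ s, D^[i] b ∈ E) : adjoinIterates D F b s ≤ E :=
  sup_le hF (Subfield.closure_le.2 (Set.image_subset_iff.2 hb))

namespace IsDifferentiallyAlgebraic

variable {D : K → K} {F L : Subfield K} {b : K}

theorem mono (hFL : F ≤ L) (hb : IsDifferentiallyAlgebraic D F b) :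
    IsDifferentiallyAlgebraic D L b :=
  let ⟨n, P, hP, hcoeff, heval⟩ := hb
  ⟨n, P, hP, fun m ↦ hFL (hcoeff m), heval⟩

theorem exists_finite_closure (hb : IsDifferentiallyAlgebraic D L b) :
    ∃ C : Set K, C.Finite ∧ C ⊆ L ∧ IsDifferentiallyAlgebraic D (Subfield.closure C) b := by
  obtain ⟨n, P, hP, hcoeff, heval⟩ := hb
  refine ⟨P.coeffs, P.coeffs.finite_toSet, fun c hc ↦ ?_, n, P, hP, fun m ↦ ?_, heval⟩
  · obtain ⟨m, -, rfl⟩ := MvPolynomial.mem_coeffs_iff.1 hc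
    exact hcoeff m
  · by_cases hm : P.coeff m = 0
    · exact hm ▸ zero_mem _
    · exact Subfield.subset_closure (P.coeff_mem_coeffs m hm)

theorem not_algebraicIndependent (hb : IsDifferentiallyAlgebraic D F b) :
    ¬ AlgebraicIndependent F fun i : ℕ ↦ D^[i] b := by
  obtain ⟨n, P, hP, hcoeff, heval⟩ := hb
  intro hind
  obtain ⟨Q, rfl⟩ : P ∈ Set.range (MvPolynomial.map F.subtype) := by
    rw [MvPolynomial.mem_range_map_iff_coeffs_subset]
    intro c hc
    obtain ⟨m, -, rfl⟩ := MvPolynomial.mem_coeffs_iff.1 hc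
    exact ⟨⟨_, hcoeff m⟩, rfl⟩
  have hQ : Q = 0 := by
    refine (hind.comp _ (Fin.val_injective (n := n + 1))).eq_zero_of_aeval_eq_zero Q ?_
    rwa [MvPolynomial.eval_map] at heval
  exact hP (by rw [hQ, map_zero])

theorem of_not_algebraicIndependent (h : ¬ AlgebraicIndependent F fun i : ℕ ↦ D^[i] b) :
    IsDifferentiallyAlgebraic D F b := by
  rw [algebraicIndependent_iff] at h
  push Not at h
  obtain ⟨P, hPb, hP⟩ := h
  have hvars : (P.vars : Set ℕ) ⊆ Set.range fun i : Fin (P.vars.sup id + 1) ↦ i.val :=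
    fun i hi ↦ ⟨⟨i, Nat.lt_succ_of_le (Finset.le_sup (f := id) hi)⟩, rfl⟩
  obtain ⟨Q, hQ⟩ := MvPolynomial.exists_rename_eq_of_vars_subset_range P _ Fin.val_injective hvars
  refine ⟨_, MvPolynomial.map F.subtype Q, fun hQ0 ↦ hP ?_, fun m ↦ ?_, ?_⟩
  · rw [map_eq_zero_iff _ (MvPolynomial.map_injective _ F.subtype_injective)] at hQ0
    rw [← hQ, hQ0, map_zero]
  · rw [MvPolynomial.coeff_map]
    exact Subtype.prop _
  · rw [← hQ, MvPolynomial.aeval_rename] at hPb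
    rwa [MvPolynomial.eval_map]

theorem exists_isAlgebraic_iterate (hb : IsDifferentiallyAlgebraic D F b) :
    ∃ n : ℕ, IsAlgebraic (adjoinIterates D F b (Set.Iio n)) (D^[n] b) := by
  by_contra! htr
  refine hb.not_algebraicIndependent
    (algebraicIndependent_of_transcendental_adjoin_Iio F.subtype_injective fun n ↦ ?_)
  have hn := htr n
  rw [adjoinIterates, ← intermediateField_adjoin_toSubfield] at hn
  exact mt IntermediateField.isAlgebraic_adjoin_iff.2 hn

end IsDifferentiallyAlgebraic

section Derivation

variable (D : Derivation ℤ K K)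

/-- The subfield of those elements of `E` whose derivative lies in `E` as well. The inclusion
`M ≤ derivComap D E` encodes that `M ≤ E` and `D` maps `M` into `E`. -/
def derivComap (E : Subfield K) : Subfield K where
  carrier := {x | x ∈ E ∧ D x ∈ E}
  zero_mem' := ⟨zero_mem E, by rw [map_zero]; exact zero_mem E⟩
  one_mem' := ⟨one_mem E, by rw [D.map_one_eq_zero]; exact zero_mem E⟩
  add_mem' := fun ⟨hx, hDx⟩ ⟨hy, hDy⟩ ↦
    ⟨add_mem hx hy, by rw [map_add]; exact add_mem hDx hDy⟩
  neg_mem' := fun ⟨hx, hDx⟩ ↦ ⟨neg_mem hx, by rw [map_neg]; exact neg_mem hDx⟩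
  mul_mem' := fun ⟨hx, hDx⟩ ⟨hy, hDy⟩ ↦
    ⟨mul_mem hx hy, by rw [D.leibniz]; exact add_mem (mul_mem hx hDy) (mul_mem hy hDx)⟩
  inv_mem' := fun _ ⟨hx, hDx⟩ ↦ ⟨inv_mem hx, by
    rw [D.leibniz_inv]; exact mul_mem (neg_mem (pow_mem (inv_mem hx) 2)) hDx⟩

variable {D} {F E E' M : Subfield K}

theorem le_derivComap_self_iff : E ≤ derivComap D E ↔ Set.MapsTo D E E :=
  ⟨fun hE _ hx ↦ (hE hx).2, fun hE _ hx ↦ ⟨hx, hE hx⟩⟩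

theorem derivComap_mono (hE : E ≤ E') : derivComap D E ≤ derivComap D E' :=
  fun _ hx ↦ ⟨hE hx.1, hE hx.2⟩

theorem derivation_aeval_sub_mem (hM : M ≤ derivComap D E) {x : K} (hx : x ∈ E) (p : M[X]) :
    D (aeval x p) - aeval x (derivative p) * D x ∈ E := by
  induction p using Polynomial.induction_on' with
  | add p q hp hq =>
    convert add_mem hp hq using 1
    simp only [map_add]
    ring
  | monomial n c =>
    have hc : algebraMap M K c = c := rfl
    convert mul_mem (pow_mem hx n) (hM c.2).2 using 1
    simp only [derivative_monomial, aeval_monomial, D.leibniz, D.leibniz_pow, smul_eq_mul,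
      nsmul_eq_mul, map_mul, map_natCast, hc]
    ring

theorem derivation_mem_of_isSeparable (hM : M ≤ derivComap D E) {x : K} (hx : x ∈ E)
    (hsep : IsSeparable M x) : D x ∈ E := by
  have hne : aeval x (derivative (minpoly M x)) ≠ 0 :=
    Separable.aeval_derivative_ne_zero hsep (minpoly.aeval M x)
  have hmul : aeval x (derivative (minpoly M x)) * D x ∈ E := by
    simpa using derivation_aeval_sub_mem hM hx (minpoly M x)
  have haeval : aeval x (derivative (minpoly M x)) ∈ E := by
    rw [aeval_eq_sum_range]
    exact sum_mem fun i _ ↦ mul_mem (hM (Subtype.prop _)).1 (pow_mem hx i)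
  simpa [hne] using mul_mem (inv_mem haeval) hmul

variable (D F E) in
/-- `E` is a differential subfield of `K` that is finitely generated as a field over `F`;
in characteristic zero, membership in such a field characterizes being differentially algebraic
over a differential subfield `F`. -/
structure IsFGDifferentialExtension : Prop where
  exists_finite : ∃ S : Set K, S.Finite ∧ F ⊔ Subfield.closure S = E
  mapsTo : Set.MapsTo D E E

namespace IsFGDifferentialExtension

theorem trans (hE : IsFGDifferentialExtension D F E) (hE' : IsFGDifferentialExtension D E E') :
    IsFGDifferentialExtension D F E' := by
  obtain ⟨S, hS, rfl⟩ := hE.exists_finite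
  obtain ⟨T, hT, rfl⟩ := hE'.exists_finite
  exact ⟨⟨S ∪ T, hS.union hT, by rw [Subfield.closure_union, sup_assoc]⟩, hE'.mapsTo⟩

theorem sup_iSup (hF : Set.MapsTo D F F) {ι : Type*} [Finite ι] {E : ι → Subfield K}
    (hE : ∀ i, IsFGDifferentialExtension D F (E i)) :
    IsFGDifferentialExtension D F (F ⊔ ⨆ i, E i) := by
  choose S hS hSE using fun i ↦ (hE i).exists_finite
  refine ⟨⟨⋃ i, S i, Set.finite_iUnion hS, ?_⟩, le_derivComap_self_iff.1 ?_⟩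
  · simp only [← hSE, Subfield.closure_iUnion]
    rw [iSup_sup_eq, ← sup_assoc, sup_eq_left.2 (iSup_le fun _ ↦ le_rfl)]
  · refine sup_le ((le_derivComap_self_iff.2 hF).trans (derivComap_mono le_sup_left))
      (iSup_le fun i ↦ ?_)
    exact (le_derivComap_self_iff.2 (hE i).mapsTo).trans
      (derivComap_mono ((le_iSup E i).trans le_sup_right))

theorem isDifferentiallyAlgebraic (hE : IsFGDifferentialExtension D F E) {b : K} (hb : b ∈ E) :
    IsDifferentiallyAlgebraic D F b := by
  obtain ⟨S, hS, rfl⟩ := hE.exists_finite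
  exact .of_not_algebraicIndependent
    (not_algebraicIndependent_of_mem_sup_closure hS fun i ↦ hE.mapsTo.iterate i hb)

end IsFGDifferentialExtension

theorem mapsTo_adjoinIterates_Iic (hF : Set.MapsTo D F F) {b : K} {n : ℕ}
    (hsep : IsSeparable (adjoinIterates D F b (Set.Iio n)) (D^[n] b)) :
    Set.MapsTo D (adjoinIterates D F b (Set.Iic n)) (adjoinIterates D F b (Set.Iic n)) := by
  set E := adjoinIterates D F b (Set.Iic n)
  have iterate_mem : ∀ i ≤ n, D^[i] b ∈ E := fun i hi ↦ iterate_mem_adjoinIterates D F b hi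
  have hFE : F ≤ derivComap D E :=
    (le_derivComap_self_iff.2 hF).trans (derivComap_mono le_sup_left)
  have iterate_mem_derivComap : ∀ i < n, D^[i] b ∈ derivComap D E := fun i hi ↦
    ⟨iterate_mem i hi.le, Function.iterate_succ_apply' D i b ▸ iterate_mem (i + 1) hi⟩
  have last_mem_derivComap : D^[n] b ∈ derivComap D E :=
    ⟨iterate_mem n le_rfl, derivation_mem_of_isSeparable
      (adjoinIterates_le hFE iterate_mem_derivComap) (iterate_mem n le_rfl) hsep⟩
  refine le_derivComap_self_iff.1 (adjoinIterates_le hFE fun i hi ↦ ?_)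
  obtain hlt | rfl := lt_or_eq_of_le (Set.mem_Iic.1 hi)
  · exact iterate_mem_derivComap i hlt
  · exact last_mem_derivComap

theorem IsDifferentiallyAlgebraic.exists_isFGDifferentialExtension [CharZero K]
    (hF : Set.MapsTo D F F) {b : K} (hb : IsDifferentiallyAlgebraic D F b) :
    ∃ E, IsFGDifferentialExtension D F E ∧ b ∈ E := by
  obtain ⟨n, hn⟩ := hb.exists_isAlgebraic_iterate
  have hsep : IsSeparable (adjoinIterates D F b (Set.Iio n)) (D^[n] b) :=
    (minpoly.irreducible hn.isIntegral).separable
  exact ⟨_, ⟨⟨_, (Set.finite_Iic n).image _, rfl⟩, mapsTo_adjoinIterates_Iic hF hsep⟩,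
    iterate_mem_adjoinIterates D F b (Set.mem_Iic.2 n.zero_le)⟩

theorem exists_isFGDifferentialExtension_of_finite [CharZero K] (hF : Set.MapsTo D F F)
    {C : Set K} (hC : C.Finite) (hCF : ∀ c ∈ C, IsDifferentiallyAlgebraic D F c) :
    ∃ E, IsFGDifferentialExtension D F E ∧ C ⊆ E := by
  have := hC.to_subtype
  choose E hE hcE using fun c : C ↦ (hCF c c.2).exists_isFGDifferentialExtension hF
  exact ⟨_, .sup_iSup hF hE, fun c hc ↦ le_sup_right (a := F) (le_iSup E ⟨c, hc⟩ (hcE ⟨c, hc⟩))⟩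

end Derivation

end Field

theorem diffAlgebraic_tower_general {K : Type*} [Field K] [CharZero K] {D : Derivation ℤ K K}
    {F L : Subfield K} (hF : Set.MapsTo D F F)
    (hL : ∀ x ∈ L, IsDifferentiallyAlgebraic D F x) {b : K}
    (hb : IsDifferentiallyAlgebraic D L b) : IsDifferentiallyAlgebraic D F b := by
  obtain ⟨C, hCfin, hCL, hCb⟩ := hb.exists_finite_closure
  obtain ⟨E, hE, hCE⟩ := exists_isFGDifferentialExtension_of_finite hF hCfin
    fun c hc ↦ hL c (hCL hc)
  have hEb : IsDifferentiallyAlgebraic D E b := hCb.mono (Subfield.closure_le.2 hCE)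
  obtain ⟨E', hE', hbE'⟩ := hEb.exists_isFGDifferentialExtension hE.mapsTo
  exact (hE.trans hE').isDifferentiallyAlgebraic hbE'

/-- If `F ⊆ L ⊆ K` are differential subfields, every element of `L` is differentially
algebraic over `F`, and every element of `K` is differentially algebraic over `L`, then
every element of `K` is differentially algebraic over `F`. -/
theorem diffAlgebraic_tower {K : Type*} [Field K] [CharZero K] (D : K → K)
    (hD_add : ∀ x y : K, D (x + y) = D x + D y)
    (hD_mul : ∀ x y : K, D (x * y) = x * D y + y * D x)
    (F L : Subfield K) (hFL : F ≤ L)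
    (hF : ∀ x ∈ F, D x ∈ F) (hLc : ∀ x ∈ L, D x ∈ L)
    (h₁ : ∀ x ∈ L, IsDifferentiallyAlgebraic D F x)
    (h₂ : ∀ x : K, IsDifferentiallyAlgebraic D L x) :
    ∀ x : K, IsDifferentiallyAlgebraic D F x := by
  let δ : Derivation ℤ K K := .mk' (AddMonoidHom.mk' D hD_add).toIntLinearMap hD_mul
  exact fun x ↦ diffAlgebraic_tower_general (D := δ) hF h₁ (h₂ x)
end

section
/- Let K be a field of characteristic 0 equipped with a derivation D, let L be a differential subfield of K, and let b ∈ K. Then b is differentially algebraic over L if and only if Db is differentially algebraic over L. -/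
/-!
An element `b` is differentially algebraic over `L` exactly when `b, Db, D²b, …` are algebraically
dependent over `L`, so a relation for `Db` is one for `b`. Conversely, if the derivatives of `b`
are dependent then some `Dⁿb` is algebraic over `F = L(b, …, Dⁿ⁻¹b)`. Since algebraic extensions in
characteristic zero are formally unramified, `D` preserves the algebraic closure of `F` in `K`.
Hence every `Dⁱb` is algebraic over the finitely generated extension `F` of `L`, and the infinite
family `Db, D²b, …` cannot be algebraically independent.
-/

section AlgebraicIndependence

variable {R A ι : Type*} [CommRing R] [CommRing A] [Algebra R A]

theorem not_algebraicIndependent_iff_exists_coeff_mem {S : Type*} [SetLike S A]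
    [SubringClass S A] {B : S} {x : ι → A} :
    ¬ AlgebraicIndependent B x ↔
      ∃ P : MvPolynomial ι A, P ≠ 0 ∧ (∀ m, P.coeff m ∈ B) ∧ MvPolynomial.eval x P = 0 := by
  have map_injective := MvPolynomial.map_injective (σ := ι) (algebraMap B A)
    Subtype.val_injective
  rw [algebraicIndependent_iff]
  push Not
  constructor
  · rintro ⟨p, hp, hp0⟩
    refine ⟨p.map (algebraMap B A), (map_ne_zero_iff _ map_injective).mpr hp0, fun m ↦ ?_, ?_⟩
    · rw [MvPolynomial.coeff_map]
      exact (p.coeff m).2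
    · rwa [MvPolynomial.eval_map, ← MvPolynomial.aeval_def]
  · rintro ⟨P, hP0, hcoeff, hP⟩
    obtain ⟨p, rfl⟩ : P ∈ Set.range (MvPolynomial.map (algebraMap B A)) := by
      rw [MvPolynomial.mem_range_map_iff_coeffs_subset]
      intro c hc
      obtain ⟨m, -, rfl⟩ := MvPolynomial.mem_coeffs_iff.mp hc
      exact ⟨⟨_, hcoeff m⟩, rfl⟩
    refine ⟨p, ?_, (map_ne_zero_iff _ map_injective).mp hP0⟩
    rwa [MvPolynomial.aeval_def, ← MvPolynomial.eval_map]

theorem algebraicIndependent_nat_iff_forall_fin_succ {x : ℕ → A} :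
    AlgebraicIndependent R x ↔ ∀ n, AlgebraicIndependent R fun i : Fin (n + 1) ↦ x i := by
  refine ⟨fun hx n ↦ hx.comp _ Fin.val_injective, fun hx ↦ ?_⟩
  refine algebraicIndependent_of_finite_type fun t ht ↦ ?_
  obtain ⟨n, hn⟩ := ht.bddAbove
  refine (hx n).comp (fun i : t ↦ ⟨i, Nat.lt_succ_of_le (hn i.2)⟩) fun i j hij ↦ ?_
  exact Subtype.ext (Fin.mk.inj hij)

theorem algebraicIndependent_of_forall_transcendental_adjoin_image_Iio [LinearOrder ι]
    [FaithfulSMul R A] {x : ι → A}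
    (hx : ∀ i, Transcendental (Algebra.adjoin R (x '' Set.Iio i)) (x i)) :
    AlgebraicIndependent R x := by
  suffices ∀ t : Finset ι, AlgebraicIndepOn R x t from
    algebraicIndependent_of_finite_type fun t ht ↦ by simpa using this ht.toFinset
  intro t
  induction t using Finset.induction_on_max with
  | empty =>
    rw [Finset.coe_empty]
    exact algebraicIndependent_empty_type_iff.mpr (FaithfulSMul.algebraMap_injective R A)
  | insert i t hlt ih =>
    rw [Finset.coe_insert]
    refine ih.insert ?_
    exact (hx i).of_tower_top_of_subalgebra_le
      (Algebra.adjoin_mono (Set.image_mono fun j hj ↦ hlt j hj))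

theorem not_algebraicIndependent_of_forall_isAlgebraic_adjoin_of_finite [IsDomain A]
    [FaithfulSMul R A] [Infinite ι] {x : ι → A} {s : Set A} (hs : s.Finite)
    (hx : ∀ i, IsAlgebraic (Algebra.adjoin R s) (x i)) :
    ¬ AlgebraicIndependent R x := by
  intro hind
  have indep_range : (AlgebraicIndependent.matroid R A).Indep (Set.range x) :=
    AlgebraicIndependent.matroid_indep_iff.mpr hind.to_subtype_range
  have range_subset : Set.range x ⊆ (AlgebraicIndependent.matroid R A).closure s := by
    rw [AlgebraicIndependent.matroid_closure_eq]
    exact Set.range_subset_iff.mpr hx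
  have : Nontrivial R := (algebraMap R A).domain_nontrivial
  refine Set.infinite_range_of_injective hind.injective (Set.encard_lt_top_iff.mp ?_)
  calc (Set.range x).encard
      ≤ (AlgebraicIndependent.matroid R A).eRk ((AlgebraicIndependent.matroid R A).closure s) :=
        indep_range.encard_le_eRk_of_subset range_subset
    _ = (AlgebraicIndependent.matroid R A).eRk s := Matroid.eRk_closure_eq _ _
    _ ≤ s.encard := Matroid.eRk_le_encard _ _
    _ < ⊤ := hs.encard_lt_top

end AlgebraicIndependence

section Derivation

theorem derivation_mem_of_formallyUnramified {R S M : Type*} [CommRing R] [CommRing S]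
    [AddCommGroup M] [Algebra R S] [Module S M] [Algebra.FormallyUnramified R S]
    (d : Derivation ℤ S M) (N : Submodule S M)
    (hd : ∀ r : R, d (algebraMap R S r) ∈ N) (x : S) : d x ∈ N := by
  -- Modulo `N` the derivation kills `R`, hence is `R`-linear, hence factors through `Ω[S⁄R] = 0`.
  let : Module R (M ⧸ N) := Module.compHom _ (algebraMap R S)
  have : IsScalarTower R S (M ⧸ N) := .of_algebraMap_smul fun _ _ ↦ rfl
  let dN : Derivation ℤ S (M ⧸ N) := N.mkQ.compDer d
  have dN_algebraMap (r : R) : dN (algebraMap R S r) = 0 :=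
    (Submodule.Quotient.mk_eq_zero N).mpr (hd r)
  let dR : Derivation R S (M ⧸ N) := .mk'
    { toFun := dN
      map_add' := dN.map_add
      map_smul' := fun r y ↦ by
        rw [Algebra.smul_def, dN.leibniz, dN_algebraMap, smul_zero, add_zero, algebraMap_smul,
          RingHom.id_apply] }
    dN.leibniz
  have dR_eq_zero : dR x = 0 := by
    rw [← dR.liftKaehlerDifferential_comp_D, Subsingleton.elim (KaehlerDifferential.D R S x) 0,
      map_zero]
  exact (Submodule.Quotient.mk_eq_zero N).mp dR_eq_zero

variable {L K : Type*} [Field L] [Field K] [Algebra L K]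

theorem derivation_mem_of_mem_adjoin (D : Derivation ℤ K K) {s : Set K}
    (E : IntermediateField (IntermediateField.adjoin L s) K)
    (hL : ∀ a : L, D (algebraMap L K a) ∈ E) (hs : ∀ x ∈ s, D x ∈ E) {x : K}
    (hx : x ∈ IntermediateField.adjoin L s) : D x ∈ E := by
  have adjoin_le {y : K} (hy : y ∈ IntermediateField.adjoin L s) : y ∈ E := E.algebraMap_mem ⟨y, hy⟩
  induction hx using IntermediateField.adjoin_induction with
  | mem x hx => exact hs x hx
  | algebraMap a => exact hL a
  | add x y _ _ hDx hDy =>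
    rw [map_add]
    exact add_mem hDx hDy
  | inv x hx hDx =>
    rw [Derivation.leibniz_inv]
    exact mul_mem (neg_mem (pow_mem (inv_mem (adjoin_le hx)) 2)) hDx
  | mul x y hx hy hDx hDy =>
    rw [Derivation.leibniz]
    exact add_mem (mul_mem (adjoin_le hx) hDy) (mul_mem (adjoin_le hy) hDx)

theorem isAlgebraic_derivation [CharZero L] (D : Derivation ℤ K K)
    (hL : ∀ a : L, IsAlgebraic L (D (algebraMap L K a))) {x : K} (hx : IsAlgebraic L x) :
    IsAlgebraic L (D x) := by
  let E := algebraicClosure L K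
  have mem_range_iff {y : K} : y ∈ LinearMap.range (Algebra.linearMap E K) ↔ IsAlgebraic L y := by
    rw [← mem_algebraicClosure_iff]
    exact ⟨fun ⟨z, hz⟩ ↦ hz ▸ z.2, fun hy ↦ ⟨⟨y, hy⟩, rfl⟩⟩
  have : Algebra.FormallyUnramified L E := .of_isSeparable L E
  exact mem_range_iff.mp <| derivation_mem_of_formallyUnramified (R := L) (D.compAlgebraMap E)
    (LinearMap.range (Algebra.linearMap E K)) (fun a ↦ mem_range_iff.mpr (hL a))
    ⟨x, mem_algebraicClosure_iff.mpr hx⟩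

theorem isAlgebraic_adjoin_derivation [CharZero L] (D : Derivation ℤ K K) {s : Set K}
    (hL : ∀ a : L, IsAlgebraic (IntermediateField.adjoin L s) (D (algebraMap L K a)))
    (hs : ∀ x ∈ s, IsAlgebraic (IntermediateField.adjoin L s) (D x)) {x : K}
    (hx : IsAlgebraic (IntermediateField.adjoin L s) x) :
    IsAlgebraic (IntermediateField.adjoin L s) (D x) := by
  simp only [← mem_algebraicClosure_iff] at hL hs
  have : CharZero (IntermediateField.adjoin L s) := charZero_of_injective_algebraMap
    (algebraMap L (IntermediateField.adjoin L s)).injective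
  exact isAlgebraic_derivation D (fun a ↦ mem_algebraicClosure_iff.mp <|
    derivation_mem_of_mem_adjoin D _ hL hs a.2) hx

theorem isAlgebraic_adjoin_image_Iio_iterate_derivation [CharZero L] (D : Derivation ℤ K K)
    (hL : ∀ a : L, D (algebraMap L K a) ∈ (algebraMap L K).range) {b : K} {n : ℕ}
    (hn : IsAlgebraic (IntermediateField.adjoin L ((D^[·] b) '' Set.Iio n)) (D^[n] b)) (i : ℕ) :
    IsAlgebraic (IntermediateField.adjoin L ((D^[·] b) '' Set.Iio n)) (D^[i] b) := by
  set F := IntermediateField.adjoin L ((D^[·] b) '' Set.Iio n)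
  have of_le {j : ℕ} (hj : j ≤ n) : IsAlgebraic F (D^[j] b) := by
    rcases hj.lt_or_eq with hlt | rfl
    · exact isAlgebraic_algebraMap
        (⟨D^[j] b, IntermediateField.subset_adjoin L _ ⟨j, hlt, rfl⟩⟩ : F)
    · exact hn
  induction i with
  | zero => exact of_le n.zero_le
  | succ i ih =>
    rw [Function.iterate_succ_apply']
    refine isAlgebraic_adjoin_derivation D (fun a ↦ ?_) ?_ ih
    · obtain ⟨c, hc⟩ := hL a
      rw [← hc]
      exact isAlgebraic_algebraMap (algebraMap L F c)
    · rintro _ ⟨j, hj, rfl⟩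
      simpa only [Function.iterate_succ_apply'] using of_le (Nat.succ_le_of_lt hj)

end Derivation

theorem isDifferentiallyAlgebraic_iff_not_algebraicIndependent {K : Type*} [Field K] {D : K → K}
    {L : Subfield K} {b : K} :
    IsDifferentiallyAlgebraic D L b ↔ ¬ AlgebraicIndependent L (D^[·] b) := by
  rw [algebraicIndependent_nat_iff_forall_fin_succ, not_forall]
  exact exists_congr fun n ↦ not_algebraicIndependent_iff_exists_coeff_mem.symm

namespace IsDifferentiallyAlgebraic

variable {K : Type*} [Field K] {L : Subfield K} {b : K}

theorem of_apply {D : K → K} (h : IsDifferentiallyAlgebraic D L (D b)) :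
    IsDifferentiallyAlgebraic D L b := by
  rw [isDifferentiallyAlgebraic_iff_not_algebraicIndependent] at h ⊢
  exact fun hb ↦ h (hb.comp Nat.succ Nat.succ_injective)

theorem exists_isAlgebraic_adjoin_image_Iio {D : K → K} (h : IsDifferentiallyAlgebraic D L b) :
    ∃ n, IsAlgebraic (IntermediateField.adjoin L ((D^[·] b) '' Set.Iio n)) (D^[n] b) := by
  rw [isDifferentiallyAlgebraic_iff_not_algebraicIndependent] at h
  contrapose! h
  exact algebraicIndependent_of_forall_transcendental_adjoin_image_Iio fun n hn ↦
    h n (IntermediateField.isAlgebraic_adjoin_iff.mpr hn)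

theorem of_forall_isAlgebraic_adjoin {D : K → K} {s : Set K} (hs : s.Finite)
    (h : ∀ i, IsAlgebraic (IntermediateField.adjoin L s) (D^[i] b)) :
    IsDifferentiallyAlgebraic D L b :=
  isDifferentiallyAlgebraic_iff_not_algebraicIndependent.mpr <|
    not_algebraicIndependent_of_forall_isAlgebraic_adjoin_of_finite hs fun i ↦
      IntermediateField.isAlgebraic_adjoin_iff.mp (h i)

theorem derivation_apply [CharZero K] {D : Derivation ℤ K K} (hL : ∀ x ∈ L, D x ∈ L)
    (h : IsDifferentiallyAlgebraic D L b) : IsDifferentiallyAlgebraic D L (D b) := by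
  obtain ⟨n, hn⟩ := h.exists_isAlgebraic_adjoin_image_Iio
  have isAlgebraic_iterate := isAlgebraic_adjoin_image_Iio_iterate_derivation D
    (fun a ↦ ⟨⟨D a, hL a a.2⟩, rfl⟩) hn
  exact of_forall_isAlgebraic_adjoin ((Set.finite_Iio n).image _) fun i ↦
    isAlgebraic_iterate (i + 1)

end IsDifferentiallyAlgebraic

/-- `b` is differentially algebraic over `L` if and only if `Db` is differentially
algebraic over `L`. -/
theorem diffAlgebraic_iff_deriv_diffAlgebraic {K : Type*} [Field K] [CharZero K] (D : K → K)
    (hD_add : ∀ x y : K, D (x + y) = D x + D y)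
    (hD_mul : ∀ x y : K, D (x * y) = x * D y + y * D x)
    (L : Subfield K) (hL : ∀ x ∈ L, D x ∈ L) (b : K) :
    IsDifferentiallyAlgebraic D L b ↔ IsDifferentiallyAlgebraic D L (D b) := by
  let d : Derivation ℤ K K := .mk' (AddMonoidHom.mk' D hD_add).toIntLinearMap hD_mul
  exact ⟨fun h ↦ h.derivation_apply (D := d) hL, .of_apply⟩
end
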